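/- The log transform of the graphical bridge counts is twice the plane tree counts: if B_n is the number of graphical bridges of length 2n (B_0 = 1) and T_n is the number of size-n submultisets of {0,...,n-1} summing to 0 mod n, then the formal power series identity sum_{n≥0} B_n x^n = exp( sum_{k≥1} (2·T_k / k)·x^k ) holds; equivalently n·B_n = sum_{i=1}^n 2·T_i·B_{n-i} for all n ≥ 1. -/

import Mathlib

open Finset Filter Topology

noncomputable section

/-- number of size-`k` submultisets of `{0,…,n-1}` whose sum is ≡ 0 mod `n` -/
def symCount (n k : ℕ) : ℕ :=
  Nat.card {s : Sym (Fin n) k // ((s : Multiset (Fin n)).map Fin.val).sum % n = 0}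

/-- `T n`: number of size-`n` submultisets of `{0,…,n-1}` summing to `0` mod `n`
(= number of rooted unlabelled cyclically distinct plane trees with `n` edges). -/
def planeTreeT (n : ℕ) : ℕ := symCount n n

/-- Walkup's formula expression `(1/n) ∑_{d ∣ n} C(2d-1, d) φ(n/d)` (exact division). -/
def walkupT (n : ℕ) : ℕ :=
  (∑ d ∈ n.divisors, Nat.choose (2 * d - 1) d * Nat.totient (n / d)) / n

/-- number of up-steps strictly before position `i` in a monotone lattice path
encoded by `f : Fin m → Bool` (`true` = up-step, `false` = right-step). -/
def upsBefore {m : ℕ} (f : Fin m → Bool) (i : Fin m) : ℕ :=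
  Nat.card {j : Fin m // j < i ∧ f j = true}

/-- area below/right of a monotone lattice path: sum over right-steps of the
number of up-steps before them. -/
def pathArea {m : ℕ} (f : Fin m → Bool) : ℕ :=
  ∑ i : Fin m, if f i = false then upsBefore f i else 0

/-- number of up-steps of a monotone lattice path. -/
def upCount {m : ℕ} (f : Fin m → Bool) : ℕ := Nat.card {i : Fin m // f i = true}

/-- the `m`-th increment (`±1`) of a walk of length `2n` encoded by
`ε : Fin (2n) → Bool` (`true` = `+1`); `0` out of range. -/
def stepVal (n : ℕ) (ε : Fin (2 * n) → Bool) (m : ℕ) : ℤ :=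
  if h : m < 2 * n then (if ε ⟨m, h⟩ then 1 else -1) else 0

/-- position of the walk after `k` steps. -/
def wpos (n : ℕ) (ε : Fin (2 * n) → Bool) (k : ℕ) : ℤ :=
  ∑ i ∈ Finset.range k, stepVal n ε i

/-- a walk of length `2n` is a bridge if it returns to `0`. -/
def IsBridge (n : ℕ) (ε : Fin (2 * n) → Bool) : Prop := wpos n ε (2 * n) = 0

/-- partial diamond area `σ_{2k} = (1/2) ∑_{i=1}^k B_{2i}` (the division is exact). -/
def psig (n : ℕ) (ε : Fin (2 * n) → Bool) (k : ℕ) : ℤ :=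
  (∑ i ∈ Finset.range k, wpos n ε (2 * (i + 1))) / 2

/-- diamond area `σ(B) = (1/2) ∑_{i=1}^n B_{2i}`. -/
def dsigma (n : ℕ) (ε : Fin (2 * n) → Bool) : ℤ := psig n ε n

/-- a bridge is graphical if `σ(B) = 0` and `σ_{2k} ≥ 0` for all `1 ≤ k < n`. -/
def IsGraphical (n : ℕ) (ε : Fin (2 * n) → Bool) : Prop :=
  IsBridge n ε ∧ dsigma n ε = 0 ∧ ∀ k, 1 ≤ k → k < n → 0 ≤ psig n ε k

/-- `B_n`: the number of graphical bridges of length `2n`. -/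
def graphicalCount (n : ℕ) : ℕ := Nat.card {ε : Fin (2 * n) → Bool // IsGraphical n ε}

/-!
Grouping the `2n` steps of a bridge in pairs gives a word of `n` letters with increments
`-1, 0, 0, 1`, in which a graphical bridge becomes a word of height and area zero whose partial
areas are nonnegative.

Mark a letter of such a word and cut at the last return (height and area zero) before the mark. The
part before the cut is an arbitrary shorter graphical word. The part after it, read cyclically from
the mark on, is an arbitrary word of height zero whose area is divisible by its length `i`: rotating
a word changes its area by multiples of `i`, and since increments are at most `1`, the rotation that
minimizes the partial areas relative to their mean slope can be made graphical, uniquely up to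
returns.

Recording which of `j` and `i + j` belong to a set identifies those words with the `i`-subsets of
`{0, …, 2i - 1}` whose sum is that of `{0, …, i - 1}` modulo `i`. Complementation preserves this
family, so half of its members avoid `2i - 1`, and these correspond to the multisets counted by
`T_i` by stars and bars.
-/

section Words

variable {α : Type*}

/-- The final height of the walk whose steps are the letters of `w`, with increments given by
`v`. -/
def wordHeight (v : α → ℤ) (w : List α) : ℤ := (w.map v).sum

/-- The area under the walk traced by `w`: the sum of the heights reached after each letter. -/
def wordArea (v : α → ℤ) (w : List α) : ℤ :=
  ∑ i ∈ Finset.range w.length, wordHeight v (w.take (i + 1))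

/-- A word after which both height and area are `0` again. A prefix with this property is called a
return. -/
def IsBalancedWord (v : α → ℤ) (w : List α) : Prop := wordHeight v w = 0 ∧ wordArea v w = 0

/-- A word without nonempty balanced prefix. -/
def IsReturnFreeWord (v : α → ℤ) (w : List α) : Prop := ∀ u, u <+: w → IsBalancedWord v u → u = []

/-- The counterpart of a graphical bridge for an arbitrary alphabet of increments. -/
def IsGraphicalWord (v : α → ℤ) (w : List α) : Prop :=
  IsBalancedWord v w ∧ ∀ u, u <+: w → 0 ≤ wordArea v u

/-- A word of height zero whose area is divisible by its length. If all increments are at most `1`,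
these are the rotations of graphical words. -/
def IsCyclicWord (v : α → ℤ) (w : List α) : Prop :=
  wordHeight v w = 0 ∧ (w.length : ℤ) ∣ wordArea v w

/-- A word of height zero whose partial areas, as a function of the prefix length, start and end on
the line of slope `h` through the origin and stay above it in between. The graphical words are those
of slope zero. -/
def IsTiltedWord (v : α → ℤ) (h : ℤ) (w : List α) : Prop :=
  wordHeight v w = 0 ∧ wordArea v w = w.length * h ∧ ∀ u, u <+: w → u.length * h ≤ wordArea v u

variable {v : α → ℤ} {h : ℤ} {p q u w : List α}

@[simp] lemma wordHeight_nil : wordHeight v [] = 0 := rfl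

@[simp] lemma wordArea_nil : wordArea v [] = 0 := rfl

@[simp] lemma wordHeight_singleton (a : α) : wordHeight v [a] = v a := by simp [wordHeight]

@[simp] lemma wordArea_singleton (a : α) : wordArea v [a] = v a := by simp [wordArea]

@[simp] lemma wordHeight_append (u w : List α) :
    wordHeight v (u ++ w) = wordHeight v u + wordHeight v w := by
  simp [wordHeight]

@[simp] lemma wordArea_append (u w : List α) :
    wordArea v (u ++ w) = wordArea v u + wordArea v w + w.length * wordHeight v u := by
  have hu : ∀ i ∈ Finset.range u.length, wordHeight v ((u ++ w).take (i + 1)) =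
      wordHeight v (u.take (i + 1)) := fun i hi ↦ by
    rw [List.take_append_of_le_length (Finset.mem_range.mp hi)]
  simp only [wordArea, List.length_append, Finset.sum_range_add, Finset.sum_congr rfl hu, add_assoc,
    List.take_length_add_append, wordHeight_append, Finset.sum_add_distrib, Finset.sum_const,
    Finset.card_range, nsmul_eq_mul]
  ring

lemma forall_prefix_append_iff {P : List α → Prop} :
    (∀ p, p <+: u ++ w → P p) ↔ (∀ p, p <+: u → P p) ∧ ∀ q, q <+: w → P (u ++ q) := by
  refine ⟨fun h ↦ ⟨fun p hp ↦ h p (List.prefix_append_of_prefix hp), fun q hq ↦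
    h (u ++ q) ((List.prefix_append_right_inj u).mpr hq)⟩, fun ⟨hu, hw⟩ p ⟨r, hr⟩ ↦ ?_⟩
  rcases List.append_eq_append_iff.mp hr with ⟨z, rfl, -⟩ | ⟨q, rfl, rfl⟩
  · exact hu p (List.prefix_append p z)
  · exact hw q (List.prefix_append q r)

lemma wordArea_append_comm (hw : wordHeight v (u ++ w) = 0) :
    wordArea v (w ++ u) = wordArea v (u ++ w) - (u ++ w).length * wordHeight v u := by
  rw [wordHeight_append] at hw
  simp only [wordArea_append, List.length_append, Nat.cast_add]
  linear_combination (u.length : ℤ) * hw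

lemma isBalancedWord_append_iff_right (hu : IsBalancedWord v u) :
    IsBalancedWord v (u ++ w) ↔ IsBalancedWord v w := by
  simp [IsBalancedWord, hu.1, hu.2]

lemma isTiltedWord_zero_iff : IsTiltedWord v 0 w ↔ IsGraphicalWord v w := by
  simp [IsTiltedWord, IsGraphicalWord, IsBalancedWord, and_assoc]

lemma isGraphicalWord_append_iff (hu : IsBalancedWord v u) :
    IsGraphicalWord v (u ++ w) ↔ IsGraphicalWord v u ∧ IsGraphicalWord v w := by
  rw [IsGraphicalWord, isBalancedWord_append_iff_right hu, forall_prefix_append_iff]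
  simp only [IsGraphicalWord, wordArea_append, hu.1, hu.2, mul_zero, zero_add, add_zero]
  tauto

lemma IsGraphicalWord.isCyclicWord_append_comm (huw : IsGraphicalWord v (u ++ w)) :
    IsCyclicWord v (w ++ u) := by
  refine ⟨by simpa [add_comm] using huw.1.1, -wordHeight v u, ?_⟩
  rw [wordArea_append_comm huw.1.1, huw.1.2, List.length_append, List.length_append]
  push_cast
  ring

lemma IsGraphicalWord.isBalancedWord_of_append_comm (huw : IsGraphicalWord v (u ++ w))
    (hwu : IsGraphicalWord v (w ++ u)) : IsBalancedWord v u := by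
  have hrot := wordArea_append_comm huw.1.1
  rw [huw.1.2, hwu.1.2, zero_sub, zero_eq_neg, mul_eq_zero, Nat.cast_eq_zero,
    List.length_eq_zero_iff, List.append_eq_nil_iff] at hrot
  rcases hrot with ⟨rfl, -⟩ | hu
  · exact ⟨rfl, rfl⟩
  · have harea := huw.1.2
    rw [wordArea_append, hu] at harea
    exact ⟨hu, by linarith [huw.2 u (List.prefix_append u w), hwu.2 w (List.prefix_append w u)]⟩

lemma exists_append_isBalancedWord_isReturnFreeWord (v : α → ℤ) (w : List α) :
    ∃ p q, w = p ++ q ∧ IsBalancedWord v p ∧ IsReturnFreeWord v q := by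
  induction w using List.reverseRecOn with
  | nil => exact ⟨[], [], rfl, ⟨rfl, rfl⟩, fun u hu _ ↦ List.prefix_nil.mp hu⟩
  | append_singleton w a ih =>
    by_cases hbal : IsBalancedWord v (w ++ [a])
    · exact ⟨w ++ [a], [], by simp, hbal, fun u hu _ ↦ List.prefix_nil.mp hu⟩
    obtain ⟨p, q, rfl, hp, hq⟩ := ih
    refine ⟨p, q ++ [a], by simp, hp, fun u hu hu' ↦ ?_⟩
    rcases List.prefix_concat_iff.mp hu with rfl | hu
    · exact absurd ((isBalancedWord_append_iff_right hp).mpr hu') (by simpa using hbal)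
    · exact hq u hu hu'

lemma IsReturnFreeWord.append_left_inj {p' q' : List α} (hq : IsReturnFreeWord v q)
    (hq' : IsReturnFreeWord v q') (hp : IsBalancedWord v p) (hp' : IsBalancedWord v p')
    (heq : p ++ q = p' ++ q') : p = p' ∧ q = q' := by
  rcases List.append_eq_append_iff.mp heq with ⟨z, rfl, rfl⟩ | ⟨z, rfl, rfl⟩
  · simp [hq z (List.prefix_append z q') ((isBalancedWord_append_iff_right hp).mp hp')]
  · simp [hq' z (List.prefix_append z q) ((isBalancedWord_append_iff_right hp').mp hp)]

lemma IsCyclicWord.exists_isRotated_isTiltedWord (hw : IsCyclicWord v w) :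
    ∃ w' h, w' ~r w ∧ IsTiltedWord v h w' := by
  classical
  obtain ⟨hheight, h, harea⟩ := hw
  obtain ⟨u, hu, hmin⟩ := w.inits.toFinset.exists_min_image
    (fun u ↦ wordArea v u - u.length * h) ⟨[], by simp⟩
  simp only [List.mem_toFinset, List.mem_inits] at hu hmin
  obtain ⟨z, rfl⟩ := hu
  obtain ⟨hmin_left, hmin_right⟩ := forall_prefix_append_iff.mp hmin
  have hz : wordHeight v z = -wordHeight v u := by
    rw [wordHeight_append] at hheight
    linarith
  refine ⟨z ++ u, h - wordHeight v u, List.isRotated_append, by simp [hz], ?_,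
    forall_prefix_append_iff.mpr ⟨fun p hp ↦ ?_, fun p hp ↦ ?_⟩⟩
  · rw [wordArea_append_comm hheight, harea, List.length_append, List.length_append]
    push_cast
    ring
  · have hp := hmin_right p hp
    simp only [wordArea_append, List.length_append, Nat.cast_add] at hp
    linarith
  · have hp := hmin_left p hp
    simp only [wordArea_append, List.length_append, Nat.cast_add, hz] at harea hp ⊢
    linarith

lemma IsTiltedWord.slope_nonneg (hw : IsTiltedWord v h w) (hne : w ≠ []) : 0 ≤ h := by
  obtain ⟨u, a, rfl⟩ := (List.eq_nil_or_concat' w).resolve_left hne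
  obtain ⟨hheight, harea, hmin⟩ := hw
  have hu := hmin u (List.prefix_append u [a])
  simp only [wordHeight_append, wordHeight_singleton, wordArea_append, wordArea_singleton,
    List.length_append, List.length_singleton] at hheight harea
  push_cast at harea
  linarith

lemma IsTiltedWord.slope_le {a : α} (hw : IsTiltedWord v h (a :: w)) : h ≤ v a := by
  simpa using hw.2.2 [a] (List.prefix_append [a] w)

lemma IsTiltedWord.isGraphicalWord_append_singleton {a : α} (hw : IsTiltedWord v (v a) (a :: w)) :
    IsGraphicalWord v (w ++ [a]) := by
  obtain ⟨hheight, harea, hmin⟩ := hw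
  rw [← List.singleton_append] at hheight harea hmin
  have hbal : IsBalancedWord v (w ++ [a]) := by
    refine ⟨by rw [wordHeight_append, add_comm, ← wordHeight_append, hheight], ?_⟩
    rw [wordArea_append_comm hheight, harea, wordHeight_singleton, sub_self]
  refine ⟨hbal, fun p hp ↦ ?_⟩
  rcases List.prefix_concat_iff.mp hp with rfl | hp
  · exact hbal.2.ge
  · have hap := hmin ([a] ++ p) ((List.prefix_append_right_inj [a]).mpr hp)
    rw [wordArea_append, wordArea_singleton, wordHeight_singleton, List.length_append,
      List.length_singleton] at hap
    push_cast at hap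
    linarith

/-- The slope lies between `0` and the first increment, hence is `0` or `1`; if it is `1`, the
first letter has to be moved to the end. -/
lemma IsTiltedWord.exists_isRotated_isGraphicalWord (hv : ∀ a, v a ≤ 1) (hw : IsTiltedWord v h w)
    (hne : w ≠ []) : ∃ g, g ~r w ∧ IsGraphicalWord v g := by
  have hnonneg := hw.slope_nonneg hne
  obtain ⟨a, t, rfl⟩ := List.exists_cons_of_ne_nil hne
  rcases hnonneg.eq_or_lt with rfl | hpos
  · exact ⟨a :: t, .refl _, isTiltedWord_zero_iff.mp hw⟩
  · obtain rfl : h = v a := le_antisymm hw.slope_le ((hv a).trans hpos)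
    exact ⟨t ++ [a], List.isRotated_append, hw.isGraphicalWord_append_singleton⟩

lemma IsCyclicWord.exists_isGraphicalWord_append (hv : ∀ a, v a ≤ 1) (hw : IsCyclicWord v w)
    (hne : w ≠ []) : ∃ a b, w = a ++ b ∧ a ≠ [] ∧ IsGraphicalWord v (b ++ a) := by
  obtain ⟨w', h, hrot, htilt⟩ := hw.exists_isRotated_isTiltedWord
  obtain ⟨g, hrot', hg⟩ := htilt.exists_isRotated_isGraphicalWord hv
    (fun hnil ↦ hne (List.isRotated_nil_iff'.mp (hnil ▸ hrot)).symm)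
  obtain ⟨k, rfl⟩ := hrot'.trans hrot
  have hg0 : g ≠ [] := by simpa using hne
  refine ⟨g.drop (k % g.length), g.take (k % g.length), List.rotate_eq_drop_append_take_mod, ?_,
    by simpa using hg⟩
  simpa using Nat.mod_lt k (List.length_pos_iff.mpr hg0)

end Words

section Counting

variable {α : Type*} {v : α → ℤ}

/-- The graphical words of length `n`. -/
def graphicalWords (v : α → ℤ) (n : ℕ) : Set (List α) := {w | w.length = n ∧ IsGraphicalWord v w}

/-- The cyclic words of length `n`. -/
def cyclicWords (v : α → ℤ) (n : ℕ) : Set (List α) := {w | w.length = n ∧ IsCyclicWord v w}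

/-- The graphical words of length `n` with a marked letter that no return precedes, encoded as
pairs: the part before the mark and the part from the mark on. -/
def markedWords (v : α → ℤ) (n : ℕ) : Set (List α × List α) :=
  {x | x.1.length + x.2.length = n ∧ IsGraphicalWord v (x.1 ++ x.2) ∧
    IsReturnFreeWord v x.1 ∧ x.2 ≠ []}

lemma injOn_markedWords (n : ℕ) : Set.InjOn (fun x ↦ x.2 ++ x.1) (markedWords v n) := by
  rintro ⟨p, u⟩ ⟨-, hg, hp, -⟩ ⟨p', u'⟩ ⟨-, hg', hp', -⟩ heq
  dsimp only at hg hp hg' hp' heq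
  rcases List.append_eq_append_iff.mp heq with ⟨z, rfl, rfl⟩ | ⟨z, rfl, rfl⟩
  · have hz : IsBalancedWord v z := by
      rw [List.append_assoc] at hg
      exact hg.isBalancedWord_of_append_comm (by simpa using hg')
    simp [hp z (List.prefix_append z p') hz]
  · have hz : IsBalancedWord v z := by
      rw [List.append_assoc] at hg'
      exact hg'.isBalancedWord_of_append_comm (by simpa using hg)
    simp [hp' z (List.prefix_append z p) hz]

lemma bijOn_markedWords_cyclicWords (hv : ∀ a, v a ≤ 1) {n : ℕ} (hn : n ≠ 0) :
    Set.BijOn (fun x ↦ x.2 ++ x.1) (markedWords v n) (cyclicWords v n) := by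
  refine ⟨fun x ⟨hlen, hg, _⟩ ↦ ⟨by rw [← hlen, List.length_append, add_comm],
    hg.isCyclicWord_append_comm⟩, injOn_markedWords n, ?_⟩
  rintro w ⟨rfl, hw⟩
  obtain ⟨a, b, rfl, ha, hg⟩ := hw.exists_isGraphicalWord_append hv
    (List.length_eq_zero_iff.not.mp hn)
  obtain ⟨p, q, rfl, hp, hq⟩ := exists_append_isBalancedWord_isReturnFreeWord v b
  rw [List.append_assoc, isGraphicalWord_append_iff hp] at hg
  have hqa : IsGraphicalWord v (q ++ (a ++ p)) := by
    rw [← List.append_assoc, isGraphicalWord_append_iff hg.2.1]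
    exact hg.symm
  exact ⟨(q, a ++ p), ⟨by simp only [List.length_append]; omega, hqa, hq, by simp [ha]⟩,
    by simp⟩

lemma surjOn_biUnion_markedWords (v : α → ℤ) (n : ℕ) :
    Set.SurjOn (fun x ↦ (x.1 ++ (x.2.1 ++ x.2.2), x.2.2.length))
      (⋃ i ∈ Finset.Icc 1 n, graphicalWords v (n - i) ×ˢ markedWords v i)
      (graphicalWords v n ×ˢ (Finset.Icc 1 n : Set ℕ)) := by
  rintro ⟨g, k⟩ ⟨⟨hlen, hg⟩, hk⟩
  obtain ⟨hk1, hkn⟩ := Finset.mem_Icc.mp (Finset.mem_coe.mp hk)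
  dsimp only at hlen hg hk1 hkn
  obtain ⟨b, u, rfl, rfl⟩ : ∃ b u, g = b ++ u ∧ u.length = k :=
    ⟨_, _, (List.take_append_drop (n - k) g).symm, by rw [List.length_drop]; omega⟩
  obtain ⟨w, p, rfl, hw, hp⟩ := exists_append_isBalancedWord_isReturnFreeWord v b
  rw [List.append_assoc, isGraphicalWord_append_iff hw] at hg
  rw [List.length_append, List.length_append] at hlen
  refine ⟨(w, p, u), ?_, by rw [List.append_assoc]⟩
  simp only [Set.mem_iUnion]
  exact ⟨p.length + u.length, Finset.mem_Icc.mpr (by omega), ⟨by dsimp only; omega, hg.1⟩,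
    rfl, hg.2, hp, List.length_pos_iff.mp hk1⟩

lemma bijOn_biUnion_markedWords (v : α → ℤ) (n : ℕ) :
    Set.BijOn (fun x ↦ (x.1 ++ (x.2.1 ++ x.2.2), x.2.2.length))
      (⋃ i ∈ Finset.Icc 1 n, graphicalWords v (n - i) ×ˢ markedWords v i)
      (graphicalWords v n ×ˢ (Finset.Icc 1 n : Set ℕ)) := by
  refine ⟨?mapsTo, ?injOn, surjOn_biUnion_markedWords v n⟩
  case mapsTo =>
    rintro ⟨w, p, u⟩ hx
    simp only [Set.mem_iUnion] at hx
    obtain ⟨i, hi, ⟨hw, hwg⟩, hpu, hg, -, hu⟩ := hx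
    have hin := (Finset.mem_Icc.mp hi).2
    have hu := List.length_pos_iff.mpr hu
    dsimp only at hw hpu hu
    refine ⟨⟨?_, (isGraphicalWord_append_iff hwg.1).mpr ⟨hwg, hg⟩⟩,
      Finset.mem_Icc.mpr ⟨hu, by dsimp only; omega⟩⟩
    simp only [List.length_append]
    omega
  case injOn =>
    rintro ⟨w, p, u⟩ hx ⟨w', p', u'⟩ hx' heq
    simp only [Set.mem_iUnion] at hx hx'
    obtain ⟨-, -, ⟨-, hw⟩, -, -, hp, -⟩ := hx
    obtain ⟨-, -, ⟨-, hw'⟩, -, -, hp', -⟩ := hx'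
    obtain ⟨hword, hlen⟩ := Prod.mk.inj heq
    rw [← List.append_assoc, ← List.append_assoc] at hword
    obtain ⟨hwp, rfl⟩ := List.append_inj' hword hlen
    obtain ⟨rfl, rfl⟩ := hp.append_left_inj hp' hw.1 hw'.1 hwp
    rfl

lemma finite_graphicalWords [Finite α] (v : α → ℤ) (n : ℕ) : (graphicalWords v n).Finite :=
  (List.finite_length_eq α n).subset fun _ hw ↦ hw.1

lemma finite_cyclicWords [Finite α] (v : α → ℤ) (n : ℕ) : (cyclicWords v n).Finite :=
  (List.finite_length_eq α n).subset fun _ hw ↦ hw.1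

/-- A graphical word with a marked letter splits at the last return before the mark, and the part
after that return is the same as a cyclic word. -/
lemma mul_ncard_graphicalWords [Finite α] (hv : ∀ a, v a ≤ 1) (n : ℕ) :
    n * (graphicalWords v n).ncard =
      ∑ i ∈ Finset.Icc 1 n, (cyclicWords v i).ncard * (graphicalWords v (n - i)).ncard := by
  have hbij {i : ℕ} (hi : i ∈ Finset.Icc 1 n) :=
    bijOn_markedWords_cyclicWords hv (Nat.one_le_iff_ne_zero.mp (Finset.mem_Icc.mp hi).1)
  have hfin {i : ℕ} (hi : i ∈ Finset.Icc 1 n) :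
      (graphicalWords v (n - i) ×ˢ markedWords v i).Finite :=
    (finite_graphicalWords v _).prod ((hbij hi).finite_iff_finite.mpr (finite_cyclicWords v i))
  have hdisj : (↑(Finset.Icc 1 n) : Set ℕ).PairwiseDisjoint
      fun i ↦ graphicalWords v (n - i) ×ˢ markedWords v i := fun i _ j _ hij ↦
    Set.disjoint_left.mpr fun x hxi hxj ↦ hij (hxi.2.1.symm.trans hxj.2.1)
  calc n * (graphicalWords v n).ncard
      = (graphicalWords v n ×ˢ (Finset.Icc 1 n : Set ℕ)).ncard := by
        rw [Set.ncard_prod, Set.ncard_coe_finset, Nat.card_Icc, Nat.add_sub_cancel, mul_comm]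
    _ = (⋃ i ∈ (Finset.Icc 1 n : Set ℕ), graphicalWords v (n - i) ×ˢ markedWords v i).ncard :=
        (bijOn_biUnion_markedWords v n).ncard_eq.symm
    _ = ∑ i ∈ Finset.Icc 1 n, (graphicalWords v (n - i) ×ˢ markedWords v i).ncard := by
        rw [(Finset.finite_toSet _).ncard_biUnion (fun i hi ↦ hfin hi) hdisj,
          finsum_mem_coe_finset]
    _ = ∑ i ∈ Finset.Icc 1 n, (cyclicWords v i).ncard * (graphicalWords v (n - i)).ncard :=
        Finset.sum_congr rfl fun i hi ↦ by
          rw [Set.ncard_prod, (hbij hi).ncard_eq, mul_comm]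

end Counting

section StarsAndBars

/-- Sorting: multisets of size `k` correspond to monotone functions on `Fin k`. -/
def orderHomEquivSym (α : Type*) [LinearOrder α] (k : ℕ) : (Fin k →o α) ≃ Sym α k where
  toFun g := ⟨List.ofFn g, by simp⟩
  invFun s := ⟨fun i ↦ (s.1.sort (· ≤ ·)).get (i.cast (by simp)), fun _ _ hij ↦
    (s.1.pairwise_sort (· ≤ ·)).sortedLE.monotone_get hij⟩
  left_inv g := by
    ext i
    simp only [OrderHom.coe_mk, Multiset.coe_sort, List.get_eq_getElem,
      List.mergeSort_eq_self _ g.monotone.sortedLE_ofFn.pairwise, List.getElem_ofFn]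
    rfl
  right_inv s := by
    refine Subtype.ext ((congrArg _ (List.ext_getElem ?_ fun i _ _ ↦ ?_)).trans
      (s.1.sort_eq (· ≤ ·)))
    · simp
    · simp only [List.getElem_ofFn, OrderHom.coe_mk, List.get_eq_getElem, Fin.val_cast]

lemma coe_orderHomEquivSym {α : Type*} [LinearOrder α] {k : ℕ} (g : Fin k →o α) :
    (orderHomEquivSym α k g : Multiset α) = List.ofFn g := rfl

lemma add_sub_le_of_strictMono {k : ℕ} {f : Fin k → ℕ} (hf : StrictMono f) {i j : Fin k}
    (hij : i ≤ j) : f i + (j - i) ≤ f j := by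
  have hle := hf.monotone hij
  have hmaps : Set.MapsTo f (Finset.Icc i j) (Finset.Icc (f i) (f j)) := by
    simpa using hf.monotone.mapsTo_Icc
  have hcard := Finset.card_le_card_of_injOn f hmaps hf.injective.injOn
  rw [Fin.card_Icc, Nat.card_Icc] at hcard
  omega

/-- Adding `i` to the `i`-th value makes a monotone function strictly monotone. -/
def orderHomEquivOrderEmbedding (k m : ℕ) : (Fin k →o Fin (m + 1)) ≃ (Fin k ↪o Fin (k + m)) where
  toFun g := OrderEmbedding.ofStrictMono (fun i ↦ ⟨g i + i, by omega⟩) fun i j hij ↦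
    Nat.add_lt_add_of_le_of_lt (g.monotone hij.le) hij
  invFun f := ⟨fun i ↦ ⟨f i - i, by
      have hle := add_sub_le_of_strictMono (f := fun i ↦ (f i : ℕ)) f.strictMono (i := i)
        (j := ⟨k - 1, Nat.sub_one_lt_of_lt i.isLt⟩) (Nat.le_sub_one_of_lt i.isLt)
      dsimp only at hle
      omega⟩, fun i j hij ↦ by
    have hle := add_sub_le_of_strictMono (f := fun i ↦ (f i : ℕ)) f.strictMono hij
    refine Fin.mk_le_mk.mpr ?_
    omega⟩
  left_inv g := by
    ext i
    exact Nat.add_sub_cancel _ _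
  right_inv f := by
    ext i
    have hle := add_sub_le_of_strictMono (f := fun i ↦ (f i : ℕ)) f.strictMono (i := ⟨0, i.pos⟩)
      (Nat.zero_le i)
    dsimp only at hle
    exact Nat.sub_add_cancel (by omega)

lemma val_orderHomEquivOrderEmbedding {k m : ℕ} (g : Fin k →o Fin (m + 1)) (i : Fin k) :
    (orderHomEquivOrderEmbedding k m g i : ℕ) = g i + i := rfl

/-- The stars-and-bars correspondence: adding `0, 1, …, k - 1` to the sorted elements of a multiset
makes them distinct. -/
def symEquivPowersetCard (k m : ℕ) :
    Sym (Fin (m + 1)) k ≃ Set.powersetCard (Fin (k + m)) k :=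
  (orderHomEquivSym (Fin (m + 1)) k).symm.trans
    ((orderHomEquivOrderEmbedding k m).trans Set.powersetCard.ofFinEmbEquiv)

lemma sum_symEquivPowersetCard {k m : ℕ} (s : Sym (Fin (m + 1)) k) :
    ∑ x ∈ (symEquivPowersetCard k m s : Finset (Fin (k + m))), (x : ℕ) =
      ((s : Multiset (Fin (m + 1))).map Fin.val).sum + ∑ i ∈ Finset.range k, i := by
  obtain ⟨g, rfl⟩ := (orderHomEquivSym _ _).surjective s
  simp [symEquivPowersetCard, Set.powersetCard.ofFinEmbEquiv_apply, val_orderHomEquivOrderEmbedding,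
    coe_orderHomEquivSym, Finset.sum_add_distrib, List.sum_ofFn,
    Fin.sum_univ_eq_sum_range (fun i ↦ i)]

end StarsAndBars

section Selections

lemma ncard_eq_two_mul_of_involutive {α : Type*} [Finite α] {τ : α → α} {S P : Set α}
    (hτ : Function.Involutive τ) (hS : Set.MapsTo τ S S) (hP : ∀ a, τ a ∈ P ↔ a ∉ P) :
    S.ncard = 2 * (S ∩ P).ncard := by
  have himage : S \ P = τ '' (S ∩ P) := by
    rw [hτ.image_eq_preimage_symm]
    ext a
    refine ⟨fun ha ↦ ⟨hS ha.1, (hP a).mpr ha.2⟩, fun ha ↦ ⟨hτ a ▸ hS ha.1, (hP a).mp ha.2⟩⟩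
  rw [← Set.ncard_inter_add_ncard_sdiff_eq_ncard S P, himage,
    Set.ncard_image_of_injective _ hτ.injective, two_mul]

/-- The `n`-element subsets of `{0, …, 2n-1}` with the same sum as `{0, …, n-1}` modulo `n`. -/
def selections (n : ℕ) : Set (Finset (Fin (n + n))) :=
  {A | A.card = n ∧ ∑ x ∈ A, (x : ℕ) ≡ ∑ i ∈ Finset.range n, i [MOD n]}

lemma compl_mem_selections {n : ℕ} {A : Finset (Fin (n + n))} (hA : A ∈ selections n) :
    Aᶜ ∈ selections n := by
  refine ⟨by simp [Finset.card_compl, hA.1], hA.2.add_left_cancel ?_⟩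
  have htotal : ∑ x : Fin (n + n), (x : ℕ) =
      ∑ i ∈ Finset.range n, i + ∑ i ∈ Finset.range n, i + n * n := by
    rw [Fin.sum_univ_eq_sum_range (fun i ↦ i), Finset.sum_range_add, Finset.sum_add_distrib,
      Finset.sum_const, Finset.card_range, smul_eq_mul]
    ring
  rw [Finset.sum_add_sum_compl, htotal]
  simp [Nat.ModEq]

lemma exists_map_castSuccEmb_eq {n : ℕ} {A : Finset (Fin (n + 1))} (hA : Fin.last n ∉ A) :
    ∃ B : Finset (Fin n), B.map Fin.castSuccEmb = A := by
  obtain ⟨B, -, rfl⟩ := Finset.subset_map_iff.mp (show A ⊆ Finset.univ.map Fin.castSuccEmb from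
    fun x hx ↦ by simpa using Fin.exists_castSucc_eq.mpr (ne_of_mem_of_not_mem hx hA))
  exact ⟨B, rfl⟩

lemma map_symEquivPowersetCard_mem_selections_iff {n : ℕ} (s : Sym (Fin (n + 1)) (n + 1)) :
    (symEquivPowersetCard (n + 1) n s : Finset (Fin (n + 1 + n))).map Fin.castSuccEmb ∈
        selections (n + 1) ↔
      ((s : Multiset (Fin (n + 1))).map Fin.val).sum % (n + 1) = 0 := by
  have hcard : (symEquivPowersetCard (n + 1) n s : Finset (Fin (n + 1 + n))).card = n + 1 :=
    (symEquivPowersetCard (n + 1) n s).2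
  refine (and_iff_right ((Finset.card_map _).trans hcard)).trans ?_
  rw [← Nat.dvd_iff_mod_eq_zero, ← Nat.add_modEq_right_iff, ← sum_symEquivPowersetCard]
  exact Iff.of_eq (congrArg (· ≡ _ [MOD _]) (Finset.sum_map _ _ _))

lemma ncard_selections_inter_last_notMem (n : ℕ) :
    (selections (n + 1) ∩ {A | Fin.last (n + 1 + n) ∉ A}).ncard = planeTreeT (n + 1) := by
  let F (s : Sym (Fin (n + 1)) (n + 1)) : Finset (Fin (n + 1 + (n + 1))) :=
    (symEquivPowersetCard (n + 1) n s : Finset (Fin (n + 1 + n))).map Fin.castSuccEmb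
  have hF : Function.Injective F := (Finset.map_injective _).comp
    (Subtype.val_injective.comp (symEquivPowersetCard (n + 1) n).injective)
  have himage : selections (n + 1) ∩ {A | Fin.last (n + 1 + n) ∉ A} =
      F '' {s | ((s : Multiset (Fin (n + 1))).map Fin.val).sum % (n + 1) = 0} := by
    ext A
    constructor
    · rintro ⟨hA, hlast⟩
      obtain ⟨B, rfl⟩ := exists_map_castSuccEmb_eq hlast
      obtain ⟨s, hs⟩ := (symEquivPowersetCard (n + 1) n).surjective
        ⟨B, (Finset.card_map _).symm.trans hA.1⟩
      obtain rfl := congrArg Subtype.val hs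
      exact ⟨s, (map_symEquivPowersetCard_mem_selections_iff s).mp hA, rfl⟩
    · rintro ⟨s, hs, rfl⟩
      exact ⟨(map_symEquivPowersetCard_mem_selections_iff s).mpr hs, by simp [F]⟩
  rw [himage, Set.ncard_image_of_injective _ hF]
  rfl

/-- Complementation exchanges the selections with and without the last element. -/
lemma ncard_selections {n : ℕ} (hn : n ≠ 0) : (selections n).ncard = 2 * planeTreeT n := by
  obtain ⟨q, rfl⟩ := Nat.exists_eq_succ_of_ne_zero hn
  rw [ncard_eq_two_mul_of_involutive (S := selections (q + 1)) compl_involutive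
    (fun _ ↦ compl_mem_selections) (P := {A | Fin.last (q + 1 + q) ∉ A})
    fun _ ↦ not_congr Finset.mem_compl, ncard_selections_inter_last_notMem]

end Selections

section StepPairs

/-- The increment, in units of two, of a walk over a pair of consecutive steps. -/
def stepPairValue (x : Bool × Bool) : ℤ := x.1.toNat + x.2.toNat - 1

lemma ncard_setOf_length_eq {α β : Type*} {n : ℕ} {P : List α → Prop} {S : Set β}
    (e : β ≃ (Fin n → α)) (he : ∀ b, b ∈ S ↔ P (List.ofFn (e b))) :
    {w : List α | w.length = n ∧ P w}.ncard = S.ncard := by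
  have himage : {w : List α | w.length = n ∧ P w} = (fun b ↦ List.ofFn (e b)) '' S := by
    ext w
    constructor
    · rintro ⟨rfl, hw⟩
      have hget : List.ofFn (e (e.symm w.get)) = w := by rw [e.apply_symm_apply, List.ofFn_get]
      exact ⟨e.symm w.get, (he _).mpr (by rwa [hget]), hget⟩
    · rintro ⟨b, hb, rfl⟩
      exact ⟨List.length_ofFn, (he b).mp hb⟩
  rw [himage]
  exact Set.ncard_image_of_injective S (List.ofFn_injective.comp e.injective)

lemma wordHeight_ofFn {α : Type*} (v : α → ℤ) {n : ℕ} (f : Fin n → α) :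
    wordHeight v (List.ofFn f) = ∑ i, v (f i) := by
  simp [wordHeight, List.map_ofFn, List.sum_ofFn]

lemma wordArea_ofFn {α : Type*} (v : α → ℤ) {n : ℕ} (f : Fin n → α) :
    wordArea v (List.ofFn f) = ∑ i : Fin n, ((n : ℤ) - i) * v (f i) := by
  induction n with
  | zero => simp
  | succ n ih =>
    rw [List.ofFn_succ, ← List.singleton_append, wordArea_append, ih, Fin.sum_univ_succ]
    simp only [wordArea_singleton, wordHeight_singleton, List.length_ofFn, Nat.cast_add,
      Nat.cast_one, Fin.val_zero, Nat.cast_zero, sub_zero, Fin.val_succ, add_sub_add_right_eq_sub]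
    ring

lemma isCyclicWord_ofFn_iff {α : Type*} (v : α → ℤ) {n : ℕ} (f : Fin n → α) :
    IsCyclicWord v (List.ofFn f) ↔ ∑ i, v (f i) = 0 ∧ (n : ℤ) ∣ ∑ i : Fin n, i * v (f i) := by
  rw [IsCyclicWord, wordHeight_ofFn, wordArea_ofFn, List.length_ofFn]
  refine and_congr_right fun h ↦ ?_
  simp only [sub_mul, Finset.sum_sub_distrib, ← Finset.mul_sum, h, mul_zero, zero_sub, dvd_neg]

/-- A subset of `{0, …, 2n-1}` as a word of membership pairs: letter `i` records which of `i` and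
`n + i` are elements. -/
def finsetEquivStepPairs (n : ℕ) : Finset (Fin (n + n)) ≃ (Fin n → Bool × Bool) where
  toFun A i := (decide (Fin.castAdd n i ∈ A), decide (Fin.natAdd n i ∈ A))
  invFun f := {x | Fin.addCases (fun i ↦ (f i).1) (fun i ↦ (f i).2) x = true}
  left_inv A := by
    ext x
    rw [Finset.mem_filter_univ]
    cases x using Fin.addCases with
    | left i => rw [Fin.addCases_left, decide_eq_true_iff]
    | right i => rw [Fin.addCases_right, decide_eq_true_iff]
  right_inv f := by
    funext i
    simp only [Finset.mem_filter_univ, Fin.addCases_left, Fin.addCases_right, Bool.decide_eq_true]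

lemma sum_eq_sum_finsetEquivStepPairs {n : ℕ} (A : Finset (Fin (n + n))) (g : Fin (n + n) → ℤ) :
    ∑ x ∈ A, g x = ∑ i, (g (Fin.castAdd n i) * (finsetEquivStepPairs n A i).1.toNat +
      g (Fin.natAdd n i) * (finsetEquivStepPairs n A i).2.toNat) := by
  have hmem (x : Fin (n + n)) : g x * (decide (x ∈ A)).toNat = if x ∈ A then g x else 0 := by
    split_ifs with hx <;> simp [hx]
  simp only [finsetEquivStepPairs, Equiv.coe_fn_mk, hmem]
  rw [Finset.sum_add_distrib, ← Fin.sum_univ_add (fun x ↦ if x ∈ A then g x else 0),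
    Finset.sum_ite_mem, Finset.univ_inter]

lemma mem_selections_iff_isCyclicWord {n : ℕ} (A : Finset (Fin (n + n))) :
    A ∈ selections n ↔ IsCyclicWord stepPairValue (List.ofFn (finsetEquivStepPairs n A)) := by
  set f := finsetEquivStepPairs n A
  have hcard : (A.card : ℤ) - n = ∑ i, stepPairValue (f i) := by
    have h := sum_eq_sum_finsetEquivStepPairs A fun _ ↦ 1
    simp only [Finset.sum_const, nsmul_eq_mul, mul_one, one_mul] at h
    simp [stepPairValue, h, f]
  have hsum : ∑ x ∈ A, (x : ℤ) - ∑ i ∈ Finset.range n, (i : ℤ) =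
      ∑ i : Fin n, i * stepPairValue (f i) + n * ∑ i, ((f i).2.toNat : ℤ) := by
    rw [sum_eq_sum_finsetEquivStepPairs A fun x ↦ (x : ℤ), ← Fin.sum_univ_eq_sum_range,
      Finset.mul_sum, ← Finset.sum_sub_distrib, ← Finset.sum_add_distrib]
    refine Finset.sum_congr rfl fun i _ ↦ ?_
    rw [Fin.val_castAdd, Fin.val_natAdd, stepPairValue]
    push_cast
    ring
  rw [isCyclicWord_ofFn_iff, ← hcard, ← dvd_add_left (dvd_mul_right (n : ℤ) _), ← hsum,
    sub_eq_zero, Nat.cast_inj]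
  refine and_congr_right fun _ ↦ Nat.ModEq.comm.trans ?_
  rw [Nat.modEq_iff_dvd]
  push_cast
  rfl

lemma ncard_cyclicWords_stepPairValue {n : ℕ} (hn : n ≠ 0) :
    (cyclicWords stepPairValue n).ncard = 2 * planeTreeT n := by
  rw [← ncard_selections hn]
  exact ncard_setOf_length_eq (finsetEquivStepPairs n) mem_selections_iff_isCyclicWord

/-- Grouping the steps of a walk in consecutive pairs. -/
def stepPairEquiv (n : ℕ) : (Fin (2 * n) → Bool) ≃ (Fin n → Bool × Bool) where
  toFun ε i := (ε ⟨2 * i, by omega⟩, ε ⟨2 * i + 1, by omega⟩)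
  invFun f j := if (j : ℕ) % 2 = 0 then (f ⟨j / 2, by omega⟩).1 else (f ⟨j / 2, by omega⟩).2
  left_inv ε := by
    funext j
    rcases Nat.mod_two_eq_zero_or_one j with h | h
    · simp only [h, if_true]
      exact congrArg ε (Fin.ext (by simp only; omega))
    · simp only [h, one_ne_zero, if_false]
      exact congrArg ε (Fin.ext (by simp only; omega))
  right_inv f := by
    funext i
    have h1 : (2 * (i : ℕ) + 1) % 2 = 1 := by omega
    have h2 : (2 * (i : ℕ) + 1) / 2 = i := by omega
    simp [h1, h2]

variable {n k : ℕ} (ε : Fin (2 * n) → Bool)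

lemma stepVal_add_stepVal (i : Fin n) :
    stepVal n ε (2 * i) + stepVal n ε (2 * i + 1) = 2 * stepPairValue (stepPairEquiv n ε i) := by
  have h0 : 2 * (i : ℕ) < 2 * n := by omega
  have h1 : 2 * (i : ℕ) + 1 < 2 * n := by omega
  simp only [stepVal, h0, h1, dif_pos, stepPairEquiv, Equiv.coe_fn_mk, stepPairValue]
  cases ε ⟨2 * i, h0⟩ <;> cases ε ⟨2 * i + 1, h1⟩ <;> rfl

lemma wpos_two_mul (hk : k ≤ n) :
    wpos n ε (2 * k) = 2 * wordHeight stepPairValue ((List.ofFn (stepPairEquiv n ε)).take k) := by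
  induction k with
  | zero => simp [wpos]
  | succ k ih =>
    have ih := ih (by omega)
    rw [wpos] at ih ⊢
    rw [mul_add_one, Finset.sum_range_succ, Finset.sum_range_succ, ih, add_assoc,
      stepVal_add_stepVal ε ⟨k, hk⟩, List.take_succ_eq_append_getElem (by simpa using hk),
      wordHeight_append, wordHeight_singleton, List.getElem_ofFn, mul_add]

lemma psig_eq_wordArea (hk : k ≤ n) :
    psig n ε k = wordArea stepPairValue ((List.ofFn (stepPairEquiv n ε)).take k) := by
  have hsum : ∑ i ∈ Finset.range k, wpos n ε (2 * (i + 1)) =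
      2 * wordArea stepPairValue ((List.ofFn (stepPairEquiv n ε)).take k) := by
    rw [wordArea, List.length_take, List.length_ofFn, min_eq_left hk, Finset.mul_sum]
    refine Finset.sum_congr rfl fun i hi ↦ ?_
    have hi := Finset.mem_range.mp hi
    rw [wpos_two_mul ε (by omega), List.take_take, min_eq_left (by omega)]
  rw [psig, hsum, Int.mul_ediv_cancel_left _ two_ne_zero]

lemma isGraphical_iff_isGraphicalWord :
    IsGraphical n ε ↔ IsGraphicalWord stepPairValue (List.ofFn (stepPairEquiv n ε)) := by
  have htake : (List.ofFn (stepPairEquiv n ε)).take n = List.ofFn (stepPairEquiv n ε) :=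
    List.take_of_length_le (by simp)
  rw [IsGraphical, IsBridge, dsigma, wpos_two_mul ε le_rfl, psig_eq_wordArea ε le_rfl, htake,
    IsGraphicalWord, IsBalancedWord, and_assoc]
  refine and_congr (by simp) (and_congr_right fun harea ↦ ⟨fun h u hu ↦ ?_, fun h k _ hk ↦ ?_⟩)
  · have hlen : u.length ≤ n := by simpa using hu.length_le
    rcases Nat.eq_zero_or_pos u.length with h0 | h0
    · simp [List.length_eq_zero_iff.mp h0]
    rw [List.prefix_iff_eq_take.mp hu]
    rcases hlen.lt_or_eq with hlt | heq
    · exact psig_eq_wordArea ε hlen ▸ h _ h0 hlt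
    · rw [heq, htake, harea]
  · rw [psig_eq_wordArea ε hk.le]
    exact h _ (List.take_prefix k _)

lemma graphicalCount_eq_ncard_graphicalWords (n : ℕ) :
    graphicalCount n = (graphicalWords stepPairValue n).ncard :=
  (ncard_setOf_length_eq (stepPairEquiv n) (S := {ε | IsGraphical n ε})
    isGraphical_iff_isGraphicalWord).symm

end StepPairs

theorem log_transform_of_graphical_bridges (n : ℕ) (hn : 1 ≤ n) :
    n * graphicalCount n =
      ∑ i ∈ Finset.Icc 1 n, 2 * planeTreeT i * graphicalCount (n - i) := by
  have hv : ∀ x, stepPairValue x ≤ 1 := by decide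
  simp only [graphicalCount_eq_ncard_graphicalWords]
  rw [mul_ncard_graphicalWords hv]
  refine Finset.sum_congr rfl fun i hi ↦ ?_
  rw [ncard_cyclicWords_stepPairValue (Nat.one_le_iff_ne_zero.mp (Finset.mem_Icc.mp hi).1)]
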